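/- If S is a symmetric endomorphism of R^6 anti-commuting with J, then *(S⋆ψ⁻) = S⋆ψ⁺ and *(S⋆ψ⁺) = -S⋆ψ⁻, where * is the Hodge star associated to the standard metric and orientation. -/

import Mathlib

open Matrix

/-- `V = ℝ⁶` with its standard basis and inner product -/
abbrev V : Type := Fin 6 → ℝ

/-- the standard basis `e₁,…,e₆` (0-indexed) -/
def ee (i : Fin 6) : V := Pi.single i 1

/-- the standard complex structure `J(e_{2i-1}) = e_{2i}` -/
def Jf (X : V) : V := ![-X 1, X 0, -X 3, X 2, -X 5, X 4]

/-- a `k`-form on `V`, viewed as a function on `k`-tuples of vectors -/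
def Form (k : ℕ) := (Fin k → V) → ℝ

/-- the basis 3-form `e^{a+1,b+1,c+1}` -/
def f3 (a b c : Fin 6) : Form 3 := fun X =>
  Matrix.det !![X 0 a, X 0 b, X 0 c; X 1 a, X 1 b, X 1 c; X 2 a, X 2 b, X 2 c]

/-- `ψ⁺ = e^{135} - e^{146} - e^{236} - e^{245}` -/
def psiP : Form 3 := fun X => f3 0 2 4 X - f3 0 3 5 X - f3 1 2 5 X - f3 1 3 4 X

/-- `ψ⁻ = e^{136} + e^{145} + e^{235} - e^{246}` -/
def psiM : Form 3 := fun X => f3 0 2 5 X + f3 0 3 4 X + f3 1 2 4 X - f3 1 3 5 X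

/-- the fundamental 2-form `ω = e^{12} + e^{34} + e^{56}` -/
def om : Form 2 := fun X =>
  (X 0 0 * X 1 1 - X 0 1 * X 1 0) + (X 0 2 * X 1 3 - X 0 3 * X 1 2) +
    (X 0 4 * X 1 5 - X 0 5 * X 1 4)

/-- the volume form `dv = (1/6)ω³ = e^{123456}` -/
def dvol : Form 6 := fun X => Matrix.det (Matrix.of fun i j => X i j)

/-- the Hodge star operator on 3-forms, characterized in the orthonormal basis `eᵢ` by
`(*u)(X₁,X₂,X₃) = (1/3!) Σ_f u(e_{f(1)},e_{f(2)},e_{f(3)}) dv(e_{f(1)},e_{f(2)},e_{f(3)},X₁,X₂,X₃)`,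
i.e. by `a ∧ *b = ⟨a,b⟩ dv`. -/
noncomputable def hodge3 (u : Form 3) : Form 3 := fun X =>
  (∑ f : Fin 3 → Fin 6, u (fun i => ee (f i)) *
    dvol (Fin.append (fun i => ee (f i)) X)) / (Nat.factorial 3)

/-- the matrix of the standard complex structure -/
def Jm : Matrix (Fin 6) (Fin 6) ℝ :=
  !![0,-1,0,0,0,0; 1,0,0,0,0,0; 0,0,0,-1,0,0; 0,0,1,0,0,0; 0,0,0,0,0,-1; 0,0,0,0,1,0]

/-- the action `A⋆u` of an endomorphism `A` on a 3-form `u`: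
`(A⋆u)(X,Y,Z) = -u(AX,Y,Z) - u(X,AY,Z) - u(X,Y,AZ)` -/
def act (A : Matrix (Fin 6) (Fin 6) ℝ) (u : Form 3) : Form 3 := fun X =>
  -(u ![A.mulVec (X 0), X 1, X 2] + u ![X 0, A.mulVec (X 1), X 2] +
    u ![X 0, X 1, A.mulVec (X 2)])

/-!
For a multilinear alternating 3-form `u` and an arbitrary endomorphism `A`,
`*(A⋆u) = -Aᵀ⋆(*u) - tr(A) *u`. Indeed `*u` pairs `u` with `dv(·, ·, ·, X₁, X₂, X₃)`; the derivation
action of `A` is moved to the other factor as that of `Aᵀ`, and, since a derivation multiplies `dv`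
by its trace, from the first three arguments of `dv` to the last three. For `u = ψ^±` this
combines with `*ψ⁺ = ψ⁻` and `*ψ⁻ = -ψ⁺`, and `S J = -J S` forces `tr S = 0`.
-/

section DerivationAction

variable {ι n R : Type*} [DecidableEq ι] [Fintype n] [CommRing R]

/-- The derivation action `u(AX₁, X₂, …) + u(X₁, AX₂, …) + ⋯` of an endomorphism `A` on forms, for
any number of arguments; on 3-forms it is `-act A`. -/
def derivAction [Fintype ι] (A : Matrix n n R) (u : (ι → n → R) → R) (X : ι → n → R) : R :=
  ∑ i, u (Function.update X i (A *ᵥ X i))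

theorem derivAction_det [DecidableEq n] (A M : Matrix n n R) :
    derivAction A det M = A.trace * M.det :=
  calc derivAction A det M
      = ∑ i, (Mᵀ.adjugate *ᵥ (A *ᵥ M i)) i :=
        Finset.sum_congr rfl fun i _ => by
          rw [← cramer_eq_adjugate_mulVec, cramer_transpose_apply]; rfl
    _ = (Mᵀ.adjugate * (A * Mᵀ)).trace := rfl
    _ = A.trace * M.det := by
        rw [trace_mul_comm, Matrix.mul_assoc, mul_adjugate, det_transpose, Matrix.mul_smul,
          Matrix.mul_one, trace_smul, smul_eq_mul, mul_comm]

theorem map_update_mulVec_single [DecidableEq n] (A : Matrix n n R)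
    (u : MultilinearMap R (fun _ : ι => n → R) R) (f : ι → n) (i : ι) :
    u (Function.update (fun k => Pi.single (f k) 1) i (A *ᵥ Pi.single (f i) 1)) =
      ∑ b, A b (f i) * u (fun k => Pi.single (Function.update f i b k) 1) := by
  have hcol : A *ᵥ Pi.single (f i) 1 = ∑ b, A b (f i) • (Pi.single b 1 : n → R) := by
    rw [mulVec_single_one]
    exact pi_eq_sum_univ' _
  have hupd (b : n) : Function.update (fun k => (Pi.single (f k) 1 : n → R)) i (Pi.single b 1) =
      fun k => Pi.single (Function.update f i b k) 1 := by
    ext1 k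
    exact (Function.apply_update (fun _ c => (Pi.single c 1 : n → R)) f i b k).symm
  simp only [hcol, u.map_update_sum, u.map_update_smul, hupd, smul_eq_mul]

theorem sum_derivAction_mul [Fintype ι] [DecidableEq n] (A : Matrix n n R)
    (u w : MultilinearMap R (fun _ : ι => n → R) R) :
    ∑ f : ι → n, derivAction A u (fun k => Pi.single (f k) 1) * w (fun k => Pi.single (f k) 1) =
      ∑ f : ι → n, u (fun k => Pi.single (f k) 1) *
        derivAction Aᵀ w (fun k => Pi.single (f k) 1) := by
  simp only [derivAction, map_update_mulVec_single, Finset.sum_mul, Finset.mul_sum]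
  rw [Finset.sum_comm]
  conv_rhs => rw [Finset.sum_comm]
  refine Finset.sum_congr rfl fun i _ => ?_
  -- Both sides are sums over pairs `(f, b)`, matched by exchanging `f i` with `b`.
  have hswap : Function.Involutive
      fun p : (ι → n) × n => (Function.update p.1 i p.2, p.1 i) := fun p => by simp
  simp only [← Fintype.sum_prod_type']
  rw [← Equiv.sum_comp hswap.toPerm]
  refine Finset.sum_congr rfl fun p _ => ?_
  simp only [Function.Involutive.coe_toPerm, Function.update_self, Function.update_idem,
    Function.update_eq_self, transpose_apply]
  ring

end DerivationAction

section ElementaryForm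

variable {ι n R : Type*} [Fintype ι] [DecidableEq ι] [CommRing R]

/-- The elementary form `e^{c i₁} ∧ e^{c i₂} ∧ ⋯` on `n → R`, for a family `c` of coordinates. -/
def elementaryForm (c : ι → n) : (n → R) [⋀^ι]→ₗ[R] R :=
  detRowAlternating.compLinearMap (LinearMap.funLeft R R c)

theorem elementaryForm_apply (c : ι → n) (X : ι → n → R) :
    elementaryForm c X = det (of fun i j => X i (c j)) :=
  rfl

theorem sum_elementaryForm_mul [Fintype n] [DecidableEq n] (c : ι → n)
    (w : (n → R) [⋀^ι]→ₗ[R] R) :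
    ∑ f : ι → n, elementaryForm c (fun k => Pi.single (f k) 1) * w (fun k => Pi.single (f k) 1) =
      (Fintype.card ι).factorial * w (fun k => Pi.single (c k) 1) := by
  have hprod (σ : Equiv.Perm ι) (f : ι → n) :
      ∏ i, (Pi.single (f (σ i)) 1 : n → R) (c i) = if f = c ∘ σ.symm then 1 else 0 := by
    simp only [Pi.single_apply, Finset.prod_ite_zero, Finset.prod_const_one, Finset.mem_univ,
      forall_true_left, Equiv.eq_comp_symm]
    simp only [funext_iff, Function.comp_apply, eq_comm]
  have hterm (σ : Equiv.Perm ι) : ∑ f : ι → n,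
      Equiv.Perm.sign σ • (∏ i, (Pi.single (f (σ i)) 1 : n → R) (c i)) *
        w (fun k => Pi.single (f k) 1) = w (fun k => Pi.single (c k) 1) := by
    have hperm : w (fun k => Pi.single (c (σ.symm k)) 1) =
        Equiv.Perm.sign σ • w (fun k => Pi.single (c k) 1) :=
      Equiv.Perm.sign_symm σ ▸ w.map_perm (fun k => Pi.single (c k) 1) σ.symm
    simp only [hprod, smul_ite, smul_zero, ite_mul, zero_mul, Finset.sum_ite_eq', Finset.mem_univ,
      if_true, Function.comp_apply, hperm, smul_mul_assoc, one_mul, smul_smul, Int.units_mul_self,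
      one_smul]
  simp only [elementaryForm_apply, det_apply, of_apply, Finset.sum_mul]
  rw [Finset.sum_comm]
  simp only [hterm, Finset.sum_const, Finset.card_univ, Fintype.card_perm, nsmul_eq_mul]

end ElementaryForm

section Append

variable {α R : Type*} {m k : ℕ}

theorem append_update_left (E : Fin m → α) (X : Fin k → α) (i : Fin m) (x : α) :
    Fin.append (Function.update E i x) X =
      Function.update (Fin.append E X) (Fin.castAdd k i) x := by
  ext j
  cases j using Fin.addCases with
  | left j => simp [Function.update_apply]
  | right j => simp [Function.update_of_ne, Fin.ext_iff, (i.isLt.trans_le (m.le_add_right j)).ne']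

theorem append_update_right (E : Fin m → α) (X : Fin k → α) (i : Fin k) (x : α) :
    Fin.append E (Function.update X i x) =
      Function.update (Fin.append E X) (Fin.natAdd m i) x := by
  ext j
  cases j using Fin.addCases with
  | left j => simp [Function.update_of_ne, Fin.ext_iff, (j.isLt.trans_le (m.le_add_right i)).ne]
  | right j => simp [Function.update_apply]

theorem derivAction_append {n : Type*} [Fintype n] [CommRing R] (A : Matrix n n R)
    (u : (Fin (m + k) → n → R) → R) (E : Fin m → n → R) (X : Fin k → n → R) :
    derivAction A u (Fin.append E X) =
      derivAction A (fun E => u (Fin.append E X)) E +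
        derivAction A (fun X => u (Fin.append E X)) X := by
  simp only [derivAction, Fin.sum_univ_add, Fin.append_left, Fin.append_right, append_update_left,
    append_update_right]

/-- The alternating form obtained from `w` by fixing its last `k` arguments. -/
def fixRight {M N : Type*} [CommRing R] [AddCommGroup M] [Module R M] [AddCommGroup N]
    [Module R N] (w : M [⋀^Fin (m + k)]→ₗ[R] N) (X : Fin k → M) : M [⋀^Fin m]→ₗ[R] N where
  toMultilinearMap := MultilinearMap.mk' (fun E => w (Fin.append E X))
    (fun E i x y => by simp only [append_update_left, w.map_update_add])
    (fun E i c x => by simp only [append_update_left, w.map_update_smul])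
  map_eq_zero_of_eq' E i j hE hij :=
    w.map_eq_zero_of_eq (Fin.append E X) (i := Fin.castAdd k i) (j := Fin.castAdd k j)
      (by simpa using hE) (by simpa using hij)

theorem fixRight_apply {M N : Type*} [CommRing R] [AddCommGroup M] [Module R M] [AddCommGroup N]
    [Module R N] (w : M [⋀^Fin (m + k)]→ₗ[R] N) (X : Fin k → M) (E : Fin m → M) :
    fixRight w X E = w (Fin.append E X) :=
  rfl

theorem det_append_single [CommRing R] (σ : Equiv.Perm (Fin (m + k)))
    (X : Fin k → Fin (m + k) → R) :
    det (of (Fin.append (fun i => Pi.single (σ (Fin.castAdd k i)) 1) X)) =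
      Equiv.Perm.sign σ * elementaryForm (fun j => σ (Fin.natAdd m j)) X := by
  set M := of (Fin.append (fun i => (Pi.single (σ (Fin.castAdd k i)) 1 : Fin (m + k) → R)) X)
  have hblock : (M.submatrix id σ).submatrix finSumFinEquiv finSumFinEquiv =
      fromBlocks 1 0 (of fun i j => X i (σ (Fin.castAdd k j)))
        (of fun i j => X i (σ (Fin.natAdd m j))) := by
    ext (i | i) (j | j)
    · simp [M, one_apply, Pi.single_apply, eq_comm]
    · simp [M, Fin.ext_iff, (i.isLt.trans_le (m.le_add_right j)).ne']
    · simp [M]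
    · simp [M]
  have hdet : Equiv.Perm.sign σ * M.det = elementaryForm (fun j => σ (Fin.natAdd m j)) X := by
    rw [← det_permute', ← det_submatrix_equiv_self finSumFinEquiv, hblock, det_fromBlocks_zero₁₂,
      det_one, one_mul, elementaryForm_apply]
  rw [← hdet, ← mul_assoc, ← Int.cast_mul, ← Units.val_mul, Int.units_mul_self, Units.val_one,
    Int.cast_one, one_mul]

end Append

/-- A form in the sense of `Form`, which allows arbitrary functions, that is multilinear and
alternating. -/
def Form.IsAlternating {k : ℕ} (u : Form k) : Prop :=
  ∃ w : V [⋀^Fin k]→ₗ[ℝ] ℝ, ∀ X, u X = w X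

theorem Form.IsAlternating.add {k : ℕ} {u v : Form k} (hu : u.IsAlternating)
    (hv : v.IsAlternating) :
    Form.IsAlternating (fun X => u X + v X) := by
  obtain ⟨⟨wu, hu⟩, ⟨wv, hv⟩⟩ := hu, hv
  exact ⟨wu + wv, fun X => congrArg₂ (· + ·) (hu X) (hv X)⟩

theorem Form.IsAlternating.sub {k : ℕ} {u v : Form k} (hu : u.IsAlternating)
    (hv : v.IsAlternating) :
    Form.IsAlternating (fun X => u X - v X) := by
  obtain ⟨⟨wu, hu⟩, ⟨wv, hv⟩⟩ := hu, hv
  exact ⟨wu - wv, fun X => congrArg₂ (· - ·) (hu X) (hv X)⟩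

theorem dvol_eq_det : dvol = det (n := Fin 6) :=
  rfl

/-- The volume form with its last three arguments fixed, against which `hodge3` pairs a 3-form. -/
def volumeWith (X : Fin 3 → V) : V [⋀^Fin 3]→ₗ[ℝ] ℝ :=
  fixRight (m := 3) (k := 3) (detRowAlternating (n := Fin 6)) X

theorem volumeWith_apply (X E : Fin 3 → V) : volumeWith X E = dvol (Fin.append E X) := by
  rw [dvol_eq_det]
  exact fixRight_apply (m := 3) (k := 3) (detRowAlternating (n := Fin 6)) X E

theorem hodge3_apply (u : Form 3) (X : Fin 3 → V) :
    hodge3 u X = (∑ f : Fin 3 → Fin 6, u (fun i => Pi.single (f i) 1) *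
      volumeWith X (fun i => Pi.single (f i) 1)) / (Nat.factorial 3) := by
  simp only [hodge3, volumeWith_apply, ee]

theorem act_neg (A : Matrix (Fin 6) (Fin 6) ℝ) (u : Form 3) (X : Fin 3 → V) :
    act A (fun Y => -u Y) X = -act A u X := by
  simp only [act]
  ring

theorem act_eq_neg_derivAction (A : Matrix (Fin 6) (Fin 6) ℝ) (u : Form 3) (X : Fin 3 → V) :
    act A u X = -derivAction A u X := by
  have h (v : Fin 3 → V) : v = ![v 0, v 1, v 2] := by ext i; fin_cases i <;> rfl
  simp only [act, derivAction, Fin.sum_univ_three]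
  congr 4 <;> rw [h (Function.update _ _ _)] <;> simp

theorem derivAction_volumeWith (A : Matrix (Fin 6) (Fin 6) ℝ) (X E : Fin 3 → V) :
    derivAction A (volumeWith X) E =
      A.trace * volumeWith X E - derivAction A (fun Y => volumeWith Y E) X := by
  have hdet : derivAction A dvol (Fin.append E X) = A.trace * dvol (Fin.append E X) := by
    rw [dvol_eq_det]
    exact derivAction_det A (Fin.append E X : Matrix (Fin 6) (Fin 6) ℝ)
  have happend := derivAction_append (m := 3) (k := 3) A dvol E X
  simp only [← volumeWith_apply] at hdet happend
  exact eq_sub_of_add_eq (happend.symm.trans hdet)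

theorem derivAction_hodge3 (A : Matrix (Fin 6) (Fin 6) ℝ) (u : Form 3) (X : Fin 3 → V) :
    derivAction A (hodge3 u) X = (∑ f : Fin 3 → Fin 6, u (fun i => Pi.single (f i) 1) *
      derivAction A (fun Y => volumeWith Y (fun i => Pi.single (f i) 1)) X) /
        (Nat.factorial 3) := by
  simp only [derivAction, hodge3_apply, ← Finset.sum_div, Finset.mul_sum]
  rw [Finset.sum_comm]

theorem hodge3_act (A : Matrix (Fin 6) (Fin 6) ℝ) {u : Form 3} (hu : u.IsAlternating)
    (X : Fin 3 → V) :
    hodge3 (act A u) X = -act Aᵀ (hodge3 u) X - A.trace * hodge3 u X := by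
  obtain ⟨w, hw⟩ := hu
  have hadj (ν : V [⋀^Fin 3]→ₗ[ℝ] ℝ) :
      ∑ f : Fin 3 → Fin 6, derivAction A u (fun i => Pi.single (f i) 1) *
          ν (fun i => Pi.single (f i) 1) =
        ∑ f : Fin 3 → Fin 6, u (fun i => Pi.single (f i) 1) *
          derivAction Aᵀ ν (fun i => Pi.single (f i) 1) := by
    simp only [derivAction, hw]
    exact sum_derivAction_mul A w.toMultilinearMap ν.toMultilinearMap
  have hvol := hadj (volumeWith X)
  simp only [derivAction_volumeWith, trace_transpose, mul_sub, Finset.sum_sub_distrib,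
    mul_left_comm _ A.trace, ← Finset.mul_sum] at hvol
  rw [act_eq_neg_derivAction, derivAction_hodge3, hodge3_apply, hodge3_apply]
  simp only [act_eq_neg_derivAction, neg_mul, Finset.sum_neg_distrib, hvol]
  ring

theorem f3_apply (a b c : Fin 6) (X : Fin 3 → V) :
    f3 a b c X = elementaryForm ![a, b, c] X := by
  rw [elementaryForm_apply, f3]
  congr 1
  ext i j
  fin_cases i <;> fin_cases j <;> rfl

theorem isAlternating_f3 (a b c : Fin 6) : (f3 a b c).IsAlternating :=
  ⟨elementaryForm ![a, b, c], f3_apply a b c⟩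

theorem hodge3_f3_perm (σ : Equiv.Perm (Fin 6)) (X : Fin 3 → V) :
    hodge3 (f3 (σ 0) (σ 1) (σ 2)) X = Equiv.Perm.sign σ * f3 (σ 3) (σ 4) (σ 5) X := by
  have hleft : ![σ 0, σ 1, σ 2] = fun i => σ (Fin.castAdd 3 i) := by
    ext i; fin_cases i <;> rfl
  have hright : ![σ 3, σ 4, σ 5] = fun i => σ (Fin.natAdd 3 i) := by
    ext i; fin_cases i <;> rfl
  simp only [hodge3_apply, f3_apply]
  rw [sum_elementaryForm_mul, Fintype.card_fin, mul_div_cancel_left₀ _ (by positivity), hleft,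
    hright, ← det_append_single (m := 3) (k := 3), volumeWith_apply]
  rfl

section ComplexVolumeForm

open Equiv

theorem hodge3_f3_of_pairs {a b c d e f : Fin 6} {s : Perm (Fin 6)}
    (hs : s = ![a, d, b, e, c, f]) (X : Fin 3 → V) :
    hodge3 (f3 a b c) X = -(Perm.sign s * f3 d e f X) := by
  let ρ : Perm (Fin 6) := ⟨![0, 2, 4, 1, 3, 5], ![0, 3, 1, 4, 2, 5], by decide, by decide⟩
  have hρ : Perm.sign ρ = -1 := by decide
  have h : hodge3 (f3 (s 0) (s 2) (s 4)) X =
      Perm.sign (s * ρ) * f3 (s 1) (s 3) (s 5) X := hodge3_f3_perm (s * ρ) X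
  simpa [Perm.sign_mul, hρ, hs] using h

theorem isAlternating_psiP : psiP.IsAlternating :=
  (((isAlternating_f3 0 2 4).sub (isAlternating_f3 0 3 5)).sub (isAlternating_f3 1 2 5)).sub
    (isAlternating_f3 1 3 4)

theorem isAlternating_psiM : psiM.IsAlternating :=
  (((isAlternating_f3 0 2 5).add (isAlternating_f3 0 3 4)).add (isAlternating_f3 1 2 4)).sub
    (isAlternating_f3 1 3 5)

theorem hodge3_psiP : hodge3 psiP = psiM := by
  have h₁ (X : Fin 3 → V) : hodge3 (f3 0 2 4) X = -f3 1 3 5 X := by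
    have hs : ⇑(1 : Perm (Fin 6)) = ![0, 1, 2, 3, 4, 5] := by decide
    simpa using hodge3_f3_of_pairs hs X
  have h₂ (X : Fin 3 → V) : hodge3 (f3 0 3 5) X = -f3 1 2 4 X := by
    have hs : ⇑(swap 2 3 * swap 4 5 : Perm (Fin 6)) = ![0, 1, 3, 2, 5, 4] := by decide
    simpa using hodge3_f3_of_pairs hs X
  have h₃ (X : Fin 3 → V) : hodge3 (f3 1 2 5) X = -f3 0 3 4 X := by
    have hs : ⇑(swap 0 1 * swap 4 5 : Perm (Fin 6)) = ![1, 0, 2, 3, 5, 4] := by decide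
    simpa using hodge3_f3_of_pairs hs X
  have h₄ (X : Fin 3 → V) : hodge3 (f3 1 3 4) X = -f3 0 2 5 X := by
    have hs : ⇑(swap 0 1 * swap 2 3 : Perm (Fin 6)) = ![1, 0, 3, 2, 4, 5] := by decide
    simpa using hodge3_f3_of_pairs hs X
  funext X
  calc hodge3 psiP X
      = hodge3 (f3 0 2 4) X - hodge3 (f3 0 3 5) X - hodge3 (f3 1 2 5) X - hodge3 (f3 1 3 4) X := by
        simp only [psiP, hodge3, sub_mul, Finset.sum_sub_distrib, sub_div]
    _ = psiM X := by
        rw [h₁, h₂, h₃, h₄, psiM]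
        ring

theorem hodge3_psiM : hodge3 psiM = fun X => -psiP X := by
  have h₁ (X : Fin 3 → V) : hodge3 (f3 0 2 5) X = f3 1 3 4 X := by
    have hs : ⇑(swap 4 5 : Perm (Fin 6)) = ![0, 1, 2, 3, 5, 4] := by decide
    simpa using hodge3_f3_of_pairs hs X
  have h₂ (X : Fin 3 → V) : hodge3 (f3 0 3 4) X = f3 1 2 5 X := by
    have hs : ⇑(swap 2 3 : Perm (Fin 6)) = ![0, 1, 3, 2, 4, 5] := by decide
    simpa using hodge3_f3_of_pairs hs X
  have h₃ (X : Fin 3 → V) : hodge3 (f3 1 2 4) X = f3 0 3 5 X := by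
    have hs : ⇑(swap 0 1 : Perm (Fin 6)) = ![1, 0, 2, 3, 4, 5] := by decide
    simpa using hodge3_f3_of_pairs hs X
  have h₄ (X : Fin 3 → V) : hodge3 (f3 1 3 5) X = f3 0 2 4 X := by
    have hs : ⇑(swap 0 1 * swap 2 3 * swap 4 5 : Perm (Fin 6)) = ![1, 0, 3, 2, 5, 4] := by decide
    simpa using hodge3_f3_of_pairs hs X
  funext X
  calc hodge3 psiM X
      = hodge3 (f3 0 2 5) X + hodge3 (f3 0 3 4) X + hodge3 (f3 1 2 4) X - hodge3 (f3 1 3 5) X := by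
        simp only [psiM, hodge3, sub_mul, add_mul, Finset.sum_sub_distrib, Finset.sum_add_distrib,
          sub_div, add_div]
    _ = -psiP X := by
        rw [h₁, h₂, h₃, h₄, psiP]
        ring

end ComplexVolumeForm

theorem trace_eq_zero_of_anticommute {n R : Type*} [Fintype n] [DecidableEq n] [CommRing R]
    [IsAddTorsionFree R] {S J : Matrix n n R} (hJ : IsUnit J) (h : S * J = -(J * S)) :
    S.trace = 0 := by
  obtain ⟨J, rfl⟩ := hJ
  refine self_eq_neg.mp ?_
  calc S.trace = (S * J * ↑J⁻¹ : Matrix n n R).trace := by rw [Units.mul_inv_cancel_right]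
    _ = -S.trace := by rw [h, Matrix.neg_mul, trace_neg, trace_units_conj]

theorem isUnit_Jm : IsUnit Jm := by
  refine IsUnit.of_mul_eq_one (-Jm) ?_
  ext i j
  fin_cases i <;> fin_cases j <;> simp [Jm, mul_apply, Fin.sum_univ_six]

theorem stmt17_general (A : Matrix (Fin 6) (Fin 6) ℝ) :
    hodge3 (act A psiM) = (fun X => act Aᵀ psiP X + A.trace * psiP X) ∧
      hodge3 (act A psiP) = fun X => -act Aᵀ psiM X - A.trace * psiM X := by
  constructor <;> funext X
  · rw [hodge3_act A isAlternating_psiM, hodge3_psiM, act_neg]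
    ring
  · rw [hodge3_act A isAlternating_psiP, hodge3_psiP]

theorem stmt17 (S : Matrix (Fin 6) (Fin 6) ℝ) (hsym : Sᵀ = S)
    (hanti : S * Jm = -(Jm * S)) :
    hodge3 (act S psiM) = act S psiP ∧ hodge3 (act S psiP) = fun X => -act S psiM X := by
  simpa only [hsym, trace_eq_zero_of_anticommute isUnit_Jm hanti, zero_mul, add_zero, sub_zero]
    using stmt17_general S
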